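/- arXiv:0912.5185 — 2 statements merged into one kernel-verified Lean document; each statement's English description precedes it below -/
import Mathlib

section
/- Let K be a field of characteristic zero, p a prime number, r a positive integer, and N₀, M₀ nilpotent r×r matrices over K. Suppose F is an r×r matrix over the field K((t)) of formal Laurent series satisfying the differential equation t·F′ + N₀·F = p·F·M₀, where F′ denotes the entrywise formal derivative of F. Then F is constant: the coefficient of tⁱ in every entry of F vanishes for all i ≠ 0, and the constant-term matrix F₀ satisfies N₀·F₀ = p·F₀·M₀. -/
/-!
Comparing coefficients of `tᵏ` turns the differential equation into
`k·Fₖ + N₀·Fₖ = p·Fₖ·M₀` for each `k` (`coeff_equation`). The operator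
`X ↦ p·X·M₀ - N₀·X` on matrices is a difference of commuting nilpotent operators, hence
nilpotent, so its only eigenvalue is `0` (`eq_zero_of_nilpotent_sylvester`). In characteristic
zero, `k ≠ 0` in `K` for every nonzero integer `k`, whence `Fₖ = 0`; the equation for `k = 0` is
the relation on the constant term.
-/

/-- The entrywise formal derivative of a matrix of Laurent series. -/
noncomputable def matDeriv (K : Type*) [Field K] {r : ℕ}
    (M : Matrix (Fin r) (Fin r) (LaurentSeries K)) :
    Matrix (Fin r) (Fin r) (LaurentSeries K) :=
  M.map (LaurentSeries.derivative K)

/-- The Sylvester operator `X ↦ p·X·M - N·X` with `N` and `M` nilpotent has no nonzero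
eigenvalue `c`. -/
theorem eq_zero_of_nilpotent_sylvester {K : Type*} [Field K] {r : ℕ}
    {N M X : Matrix (Fin r) (Fin r) K} (hN : IsNilpotent N) (hM : IsNilpotent M)
    {c : K} (hc : c ≠ 0) (p : ℕ) (h : c • X + N * X = p • (X * M)) : X = 0 := by
  have hD : IsNilpotent (LinearMap.mulRight K (p • M) - LinearMap.mulLeft K N) := by
    have hl := (LinearMap.isNilpotent_mulLeft_iff K N).mpr hN
    have hr := (LinearMap.isNilpotent_mulRight_iff K (p • M)).mpr (hM.smul p)
    exact (LinearMap.commute_mulLeft_right (R := K) N (p • M)).symm.isNilpotent_sub hr hl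
  by_contra hX
  have hv : Module.End.HasEigenvector
      (LinearMap.mulRight K (p • M) - LinearMap.mulLeft K N) c X := by
    refine ⟨Module.End.mem_eigenspace_iff.mpr ?_, hX⟩
    rw [LinearMap.sub_apply, LinearMap.mulRight_apply, LinearMap.mulLeft_apply,
      mul_smul_comm, ← h, add_sub_cancel_right]
  exact hc ((Module.End.hasEigenvalue_of_hasEigenvector hv).isNilpotent_of_isNilpotent hD).eq_zero

theorem coeff_equation {K : Type*} [Field K] {p r : ℕ} {N M : Matrix (Fin r) (Fin r) K}
    {F : Matrix (Fin r) (Fin r) (LaurentSeries K)}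
    (heq : (HahnSeries.single (1 : ℤ) (1 : K)) • matDeriv K F +
        N.map (HahnSeries.C : K →+* LaurentSeries K) * F =
      p • (F * M.map (HahnSeries.C : K →+* LaurentSeries K))) (k : ℤ) :
    (k : K) • (Matrix.of fun i j => (F i j).coeff k) +
        N * (Matrix.of fun i j => (F i j).coeff k) =
      p • ((Matrix.of fun i j => (F i j).coeff k) * M) := by
  ext i j
  have h := congrArg (fun f : LaurentSeries K => f.coeff k) (congrFun (congrFun heq i) j)
  -- The factor `t` shifts the derivative, so the product multiplies the `k`-th coefficient by `k`.
  have hd : (HahnSeries.single (1 : ℤ) (1 : K) * LaurentSeries.derivative K (F i j)).coeff k =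
      k * (F i j).coeff k := by
    rw [HahnSeries.coeff_single_mul]
    simp [LaurentSeries.derivative_apply, LaurentSeries.hasseDeriv_coeff]
  simp only [matDeriv, Matrix.add_apply, Matrix.smul_apply, Matrix.map_apply, Matrix.mul_apply,
    smul_eq_mul, HahnSeries.coeff_add, HahnSeries.coeff_sum, hd, HahnSeries.coeff_nsmul,
    Pi.smul_apply, HahnSeries.C_apply, HahnSeries.coeff_single_zero_mul,
    HahnSeries.coeff_mul_single_zero, Matrix.of_apply] at h ⊢
  exact h

/-- If `N₀` and `M₀` are nilpotent matrices over a field `K` of characteristic zero and a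
matrix `F` of formal Laurent series satisfies `t·F′ + N₀·F = p·F·M₀`, then `F` is constant:
all nonzero-degree coefficients vanish, and the constant term `F₀` satisfies
`N₀·F₀ = p·F₀·M₀`. -/
theorem laurent_solution_of_nilpotent_system_is_constant
    (K : Type*) [Field K] [CharZero K] (p : ℕ) (hp : p.Prime) (r : ℕ) (hr : 0 < r)
    (N₀ M₀ : Matrix (Fin r) (Fin r) K) (hN₀ : IsNilpotent N₀) (hM₀ : IsNilpotent M₀)
    (F : Matrix (Fin r) (Fin r) (LaurentSeries K))
    (heq : (HahnSeries.single (1 : ℤ) (1 : K)) • matDeriv K F +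
        N₀.map (HahnSeries.C : K →+* LaurentSeries K) * F =
      p • (F * M₀.map (HahnSeries.C : K →+* LaurentSeries K))) :
    (∀ (i j : Fin r) (k : ℤ), k ≠ 0 → (F i j).coeff k = 0) ∧
    N₀ * (Matrix.of fun i j => (F i j).coeff 0) =
      p • ((Matrix.of fun i j => (F i j).coeff 0) * M₀) := by
  refine ⟨fun i j k hk => ?_, by simpa using coeff_equation heq 0⟩
  exact congrFun (congrFun (eq_zero_of_nilpotent_sylvester hN₀ hM₀ (Int.cast_ne_zero.mpr hk) p
    (coeff_equation heq k)) i) j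
end

section
/- Let K be a field of characteristic zero and r a positive integer. Let N and N′ be r×r matrices over K((t)) such that t·N and t·N′ have all entries in K[[t]], and such that the residue matrices N₀ := (constant-term matrix of t·N) and N₀′ := (constant-term matrix of t·N′) are both nilpotent. Suppose H ∈ GL_r(K((t))) satisfies the gauge relation N′ = H·N·H⁻¹ + H′·H⁻¹, where H′ is the entrywise formal derivative of H. Then all entries of H and of H⁻¹ lie in K[[t]], the constant-term matrix H₀ of H is invertible over K, and N₀′ = H₀·N₀·H₀⁻¹. -/
/-!
With `θ = t·d/dt`, `A = t·N`, `A' = t·N'`, the gauge relation reads `θ H = A' H - H A`. If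
`m` is the lowest exponent occurring in `H`, comparing coefficients of `t^m` gives
`m • H_m = A'₀ H_m - H_m A₀`. The operator `X ↦ A'₀ X - X A₀` is a difference of commuting
nilpotent operators, hence nilpotent, so its only eigenvalue is `0`; in characteristic zero this
forces `m ≥ 0` (`sylvester_eigen_eq_zero`, `horizontal_inPowerSeries`). By the Leibniz rule `H⁻¹`
satisfies the same kind of equation, with the roles of `N` and `N'` exchanged, so it is integral
as well. The remaining claims are the constant terms of `H H⁻¹ = 1 = H⁻¹ H` and of the
equation for `H`.
-/

/-- An element of the Laurent series field `K((t))` lies in the canonical image of the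
power series ring `K[[t]]`. -/
def InPowerSeries (K : Type*) [Field K] (x : LaurentSeries K) : Prop :=
  x ∈ Set.range (HahnSeries.ofPowerSeries ℤ K)

/-- A matrix `M` over `K((t))` has at most a simple pole at `t = 0`: every entry of `t·M`
lies in `K[[t]]`. -/
def SimplePole (K : Type*) [Field K] {r : ℕ}
    (M : Matrix (Fin r) (Fin r) (LaurentSeries K)) : Prop :=
  ∀ i j, InPowerSeries K (HahnSeries.single (1 : ℤ) (1 : K) * M i j)

/-- The residue matrix of a matrix over `K((t))`: the matrix of constant terms of `t·M`. -/
noncomputable def residueMatrix (K : Type*) [Field K] {r : ℕ}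
    (M : Matrix (Fin r) (Fin r) (LaurentSeries K)) : Matrix (Fin r) (Fin r) K :=
  Matrix.of fun i j => (HahnSeries.single (1 : ℤ) (1 : K) * M i j).coeff 0

/-- The matrix of constant terms (coefficients of `t⁰`) of a matrix of Laurent series. -/
noncomputable def constMatrix (K : Type*) [Field K] {r : ℕ}
    (M : Matrix (Fin r) (Fin r) (LaurentSeries K)) : Matrix (Fin r) (Fin r) K :=
  Matrix.of fun i j => (M i j).coeff 0


theorem inPowerSeries_iff {K : Type*} [Field K] {x : LaurentSeries K} :
    InPowerSeries K x ↔ ∀ n < 0, x.coeff n = 0 := by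
  constructor
  · rintro ⟨p, rfl⟩ n hn
    rw [HahnSeries.ofPowerSeries_apply, HahnSeries.embDomain_of_notMem_range]
    rintro ⟨k, hk⟩
    have hk' : (k : ℤ) = n := hk
    omega
  · intro h
    refine ⟨PowerSeries.mk fun n => x.coeff n, ?_⟩
    ext n
    by_cases hn : n < 0
    · rw [h n hn, HahnSeries.ofPowerSeries_apply, HahnSeries.embDomain_of_notMem_range]
      rintro ⟨k, hk⟩
      have hk' : (k : ℤ) = n := hk
      omega
    · lift n to ℕ using by omega
      rw [HahnSeries.ofPowerSeries_apply_coeff, PowerSeries.coeff_mk]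

/-- Lowest-order coefficient of a product: only the pair `(0, m)` contributes. -/
theorem coeff_mul_lowest {K : Type*} [Field K] {a x : LaurentSeries K} {m : ℤ}
    (ha : ∀ n < 0, a.coeff n = 0) (hx : ∀ n < m, x.coeff n = 0) :
    (a * x).coeff m = a.coeff 0 * x.coeff m := by
  rw [HahnSeries.coeff_mul]
  refine Finset.sum_eq_single (0, m) ?_ ?_
  · rintro ⟨i, j⟩ hij hne
    have hs : i + j = m := (Finset.mem_antidiagonal.mp hij).2.2
    rcases lt_trichotomy i 0 with hi | hi | hi
    · simp [ha i hi]
    · exact absurd (by ext <;> simp <;> omega) hne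
    · simp [hx j (by omega)]
  · intro h
    by_contra hne
    refine h (Finset.mem_antidiagonal.mpr ⟨?_, ?_, zero_add m⟩)
    · exact left_ne_zero_of_mul hne
    · exact right_ne_zero_of_mul hne

theorem coeff_euler {K : Type*} [Field K] (x : LaurentSeries K) (n : ℤ) :
    (HahnSeries.single (1 : ℤ) (1 : K) * LaurentSeries.derivative K x).coeff n
      = (n : K) * x.coeff n := by
  rw [HahnSeries.coeff_single_mul, LaurentSeries.derivative_apply, LaurentSeries.hasseDeriv_coeff]
  simp

theorem derivative_mul' {K : Type*} [Field K] (x y : LaurentSeries K) :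
    LaurentSeries.derivative K (x * y)
      = LaurentSeries.derivative K x * y + x * LaurentSeries.derivative K y := by
  have ht : HahnSeries.single (1 : ℤ) (1 : K) ≠ 0 := by simp
  apply mul_left_cancel₀ ht
  -- Multiplication by `t` turns `d/dt` into `θ`, which does not enlarge supports, so all three
  -- products can be expanded over one and the same antidiagonal.
  have hsupp : ∀ z : LaurentSeries K,
      (HahnSeries.single (1 : ℤ) (1 : K) * LaurentSeries.derivative K z).support ⊆ z.support := by
    intro z n hn
    rw [HahnSeries.mem_support, coeff_euler] at hn
    exact right_ne_zero_of_mul hn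
  rw [mul_add, ← mul_assoc, mul_left_comm _ x]
  ext n
  rw [HahnSeries.coeff_add, coeff_euler, HahnSeries.coeff_mul,
    HahnSeries.coeff_mul_left' x.isPWO_support (hsupp x),
    HahnSeries.coeff_mul_right' y.isPWO_support (hsupp y), Finset.mul_sum,
    ← Finset.sum_add_distrib]
  refine Finset.sum_congr rfl ?_
  rintro ⟨i, j⟩ hij
  have hs : i + j = n := (Finset.mem_antidiagonal.mp hij).2.2
  simp only [coeff_euler, ← hs]
  push_cast
  ring

theorem matDeriv_mul {K : Type*} [Field K] {r : ℕ}
    (X Y : Matrix (Fin r) (Fin r) (LaurentSeries K)) :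
    matDeriv K (X * Y) = matDeriv K X * Y + X * matDeriv K Y := by
  ext1 i j
  simp only [matDeriv, Matrix.map_apply, Matrix.mul_apply, Matrix.add_apply, map_sum,
    derivative_mul', Finset.sum_add_distrib]

theorem matDeriv_one {K : Type*} [Field K] {r : ℕ} :
    matDeriv K (1 : Matrix (Fin r) (Fin r) (LaurentSeries K)) = 0 := by
  have h := matDeriv_mul (1 : Matrix (Fin r) (Fin r) (LaurentSeries K)) 1
  simpa using h

/-- For nilpotent `A`, `B`, the operator `X ↦ B X - X A` is nilpotent, so it has no nonzero
eigenvalue. -/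
theorem sylvester_eigen_eq_zero {K : Type*} [Field K] {r : ℕ} {A B X : Matrix (Fin r) (Fin r) K}
    (hA : IsNilpotent A) (hB : IsNilpotent B) {c : K} (hc : c ≠ 0)
    (h : c • X = B * X - X * A) : X = 0 := by
  obtain ⟨k, hk⟩ := (LinearMap.commute_mulLeft_right (R := K) B A).isNilpotent_sub
    ((LinearMap.isNilpotent_mulLeft_iff K B).mpr hB)
    ((LinearMap.isNilpotent_mulRight_iff K A).mpr hA)
  set T := LinearMap.mulLeft K B - LinearMap.mulRight K A with hT
  have hTX : T X = c • X := by simp [hT, h]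
  have hpow : ∀ n : ℕ, (T ^ n) X = c ^ n • X := by
    intro n
    induction n with
    | zero => simp
    | succ n ih => rw [pow_succ, Module.End.mul_apply, hTX, map_smul, ih, smul_smul, pow_succ']
  have h0 := hpow k
  rw [hk, LinearMap.zero_apply] at h0
  exact (smul_eq_zero.mp h0.symm).resolve_left (pow_ne_zero _ hc)

/-- The recursion at a lowest exponent: if `X' = B X - X A` with `A`, `B` having simple poles and
`X` has no terms below `t^m`, then `m • X_m = B₀ X_m - X_m A₀`, where `A₀`, `B₀` are the
residues. -/
theorem horizontal_coeff {K : Type*} [Field K] {r : ℕ}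
    {A B X : Matrix (Fin r) (Fin r) (LaurentSeries K)}
    (hA : SimplePole K A) (hB : SimplePole K B) (h : matDeriv K X = B * X - X * A)
    {m : ℤ} (hX : ∀ n < m, ∀ i j, (X i j).coeff n = 0) :
    (m : K) • (Matrix.of fun i j => (X i j).coeff m) =
      residueMatrix K B * (Matrix.of fun i j => (X i j).coeff m)
        - (Matrix.of fun i j => (X i j).coeff m) * residueMatrix K A := by
  ext i j
  have hij : LaurentSeries.derivative K (X i j) = (B * X - X * A) i j := by rw [← h]; rfl
  simp only [Matrix.smul_apply, Matrix.of_apply, smul_eq_mul, Matrix.sub_apply, Matrix.mul_apply,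
    residueMatrix]
  rw [← coeff_euler, hij, Matrix.sub_apply, Matrix.mul_apply, Matrix.mul_apply, mul_sub,
    Finset.mul_sum, Finset.mul_sum, HahnSeries.coeff_sub, HahnSeries.coeff_sum,
    HahnSeries.coeff_sum]
  congr 1 <;> refine Finset.sum_congr rfl fun k _ => ?_
  · rw [← mul_assoc, coeff_mul_lowest (inPowerSeries_iff.mp (hB i k)) fun n hn => hX n hn k j]
  · rw [mul_left_comm, mul_comm,
      coeff_mul_lowest (inPowerSeries_iff.mp (hA k j)) fun n hn => hX n hn i k, mul_comm]

/-- Solutions of `X' = B X - X A`, with `A`, `B` having simple poles and nilpotent residues, are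
integral. -/
theorem horizontal_inPowerSeries {K : Type*} [Field K] [CharZero K] {r : ℕ}
    {A B X : Matrix (Fin r) (Fin r) (LaurentSeries K)}
    (hA : SimplePole K A) (hB : SimplePole K B)
    (hA0 : IsNilpotent (residueMatrix K A)) (hB0 : IsNilpotent (residueMatrix K B))
    (h : matDeriv K X = B * X - X * A) :
    ∀ n < 0, ∀ i j, (X i j).coeff n = 0 := by
  obtain ⟨b, hb⟩ := (Set.finite_range fun p : Fin r × Fin r => (X p.1 p.2).order).bddBelow
  have hbase : ∀ n < b, ∀ i j, (X i j).coeff n = 0 := fun n hn i j =>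
    HahnSeries.coeff_eq_zero_of_lt_order (hn.trans_le (hb ⟨(i, j), rfl⟩))
  by_cases hb0 : 0 ≤ b
  · exact fun n hn => hbase n (hn.trans_le hb0)
  have key : ∀ m, b ≤ m → m ≤ 0 → ∀ n < m, ∀ i j, (X i j).coeff n = 0 := by
    intro m hm
    induction m, hm using Int.leInduction with
    | base => exact fun _ => hbase
    | succ m hm ih =>
      intro hm0 n hn i j
      have ih' := ih (by omega)
      rcases (Int.lt_add_one_iff.mp hn).lt_or_eq with hlt | rfl
      · exact ih' n hlt i j
      · have hn0 : (n : K) ≠ 0 := by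
          rw [Int.cast_ne_zero]
          omega
        exact congrFun (congrFun
          (sylvester_eigen_eq_zero hA0 hB0 hn0 (horizontal_coeff hA hB h ih')) i) j
  exact key 0 (by omega) le_rfl

theorem constMatrix_mul_eq_one {K : Type*} [Field K] {r : ℕ}
    {X Y : Matrix (Fin r) (Fin r) (LaurentSeries K)}
    (hX : ∀ n < 0, ∀ i j, (X i j).coeff n = 0) (hY : ∀ n < 0, ∀ i j, (Y i j).coeff n = 0)
    (h : X * Y = 1) : constMatrix K X * constMatrix K Y = 1 := by
  ext i j
  have hij := congrArg (fun M => (M i j).coeff 0) h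
  simp only [Matrix.mul_apply, HahnSeries.coeff_sum] at hij
  simp only [Matrix.mul_apply, constMatrix, Matrix.of_apply]
  rw [Finset.sum_congr rfl fun k _ => (coeff_mul_lowest (fun n hn => hX n hn i k)
    fun n hn => hY n hn k j).symm, hij]
  by_cases hd : i = j <;> simp [Matrix.one_apply, hd]

/-- If `N` and `N′` both have at most simple poles at `t = 0` with nilpotent residue
matrices, and `N′ = H·N·H⁻¹ + H′·H⁻¹` for some `H ∈ GL_r(K((t)))`, then `H` and `H⁻¹` have
all entries in `K[[t]]`, the constant term `H₀` of `H` is invertible (with inverse the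
constant term of `H⁻¹`), and `N₀′ = H₀·N₀·H₀⁻¹`. -/
theorem gauge_equivalence_of_nilpotent_residues
    (K : Type*) [Field K] [CharZero K] (r : ℕ) (hr : 0 < r)
    (N N' H Hinv : Matrix (Fin r) (Fin r) (LaurentSeries K))
    (hN : SimplePole K N) (hN' : SimplePole K N')
    (hNres : IsNilpotent (residueMatrix K N)) (hN'res : IsNilpotent (residueMatrix K N'))
    (h₁ : H * Hinv = 1) (h₂ : Hinv * H = 1)
    (hgauge : N' = H * N * Hinv + matDeriv K H * Hinv) :
    (∀ i j, InPowerSeries K (H i j)) ∧ (∀ i j, InPowerSeries K (Hinv i j)) ∧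
    constMatrix K H * constMatrix K Hinv = 1 ∧
    constMatrix K Hinv * constMatrix K H = 1 ∧
    residueMatrix K N' = constMatrix K H * residueMatrix K N * constMatrix K Hinv := by
  have hH : matDeriv K H = N' * H - H * N := by
    rw [hgauge, add_mul, mul_assoc (H * N), mul_assoc (matDeriv K H), h₂, mul_one, mul_one,
      add_sub_cancel_left]
  have hHinv : matDeriv K Hinv = N * Hinv - Hinv * N' := by
    have h := matDeriv_mul H Hinv
    rw [h₁, matDeriv_one, hH] at h
    calc matDeriv K Hinv = Hinv * (H * matDeriv K Hinv) := by rw [← mul_assoc, h₂, one_mul]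
      _ = Hinv * (-((N' * H - H * N) * Hinv)) := by rw [eq_neg_of_add_eq_zero_right h.symm]
      _ = (Hinv * H) * N * Hinv - Hinv * N' * (H * Hinv) := by noncomm_ring
      _ = _ := by rw [h₁, h₂, one_mul, mul_one]
  have hHint := horizontal_inPowerSeries hN hN' hNres hN'res hH
  have hHinvint := horizontal_inPowerSeries hN' hN hN'res hNres hHinv
  have h₁' := constMatrix_mul_eq_one hHint hHinvint h₁
  refine ⟨fun i j => inPowerSeries_iff.mpr fun n hn => hHint n hn i j,
    fun i j => inPowerSeries_iff.mpr fun n hn => hHinvint n hn i j, h₁',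
    constMatrix_mul_eq_one hHinvint hHint h₂, ?_⟩
  have h0 := horizontal_coeff hN hN' hH hHint
  rw [Int.cast_zero, zero_smul] at h0
  have h0' : residueMatrix K N' * constMatrix K H = constMatrix K H * residueMatrix K N :=
    sub_eq_zero.mp h0.symm
  rw [← h0', mul_assoc, h₁', mul_one]
end
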